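/- Define the entropy E(α) = 1 − JS(α, α^∁) for an intuitionistic fuzzy value α, where α^∁ = ⟨ν_α, μ_α⟩. If intuitionistic fuzzy values α and β satisfy either μ_α ≤ μ_β ≤ ν_β ≤ ν_α or μ_α ≥ μ_β ≥ ν_β ≥ ν_α, then E(α) ≤ E(β). -/

import Mathlib

/-- `L p q = p·log₂(2p/(p+q)) + q·log₂(2q/(p+q))`, with Lean's conventions
`0 * log₂ _ = 0` and `x / 0 = 0`, `log₂ 0 = 0` implementing `0·log 0 = 0`
and `0·log(0/0) = 0`. -/
noncomputable def L (p q : ℝ) : ℝ :=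
  p * Real.logb 2 (2 * p / (p + q)) + q * Real.logb 2 (2 * q / (p + q))

/-- An intuitionistic fuzzy value: a pair `⟨μ, ν⟩` with `0 ≤ μ`, `0 ≤ ν`,
`μ + ν ≤ 1` (hence also `μ ≤ 1` and `ν ≤ 1`). -/
@[ext]
structure IFV where
  mu : ℝ
  nu : ℝ
  mu_nonneg : 0 ≤ mu
  nu_nonneg : 0 ≤ nu
  sum_le : mu + nu ≤ 1

/-- `Z(α,β) = L(1−μ_α, 1−μ_β) + L(ν_α, ν_β)`. -/
noncomputable def Z (a b : IFV) : ℝ := L (1 - a.mu) (1 - b.mu) + L a.nu b.nu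

/-- The normalized Jensen–Shannon IF divergence `JS(α,β) = √(Z(α,β)/2)`. -/
noncomputable def JS (a b : IFV) : ℝ := Real.sqrt (Z a b / 2)

/-- Atanassov's order: `α ⊂ β` iff `μ_α ≤ μ_β` and `ν_α ≥ ν_β`. -/
def IFV.sub (a b : IFV) : Prop := a.mu ≤ b.mu ∧ b.nu ≤ a.nu

/-- Strict Atanassov order: `α ⊊ β` iff `α ⊂ β` and `α ≠ β`. -/
def IFV.ssub (a b : IFV) : Prop := a.sub b ∧ a ≠ b

/-- The IFV `⟨1, 0⟩`. -/
def IFV.posOne : IFV := ⟨1, 0, by norm_num, le_rfl, by norm_num⟩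

/-- The IFV `⟨0, 1⟩`. -/
def IFV.negOne : IFV := ⟨0, 1, le_rfl, by norm_num, by norm_num⟩

/-- The complement `α^∁ = ⟨ν_α, μ_α⟩`. -/
def IFV.compl (a : IFV) : IFV :=
  ⟨a.nu, a.mu, a.nu_nonneg, a.mu_nonneg, by linarith [a.sum_le]⟩

/-- The entropy `E(α) = 1 − JS(α, α^∁)`. -/
noncomputable def E (a : IFV) : ℝ := 1 - JS a a.compl

lemma gibbs_aux {a s t : ℝ} (ha : 0 ≤ a) (hs : 0 < s) (ht : 0 < t) :
    a * Real.log t + a - s * t / 2 ≤ a * Real.log (2 * a / s) := by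
  rcases ha.eq_or_lt with h | h
  · subst h
    have : 0 < s * t := mul_pos hs ht
    simp only [zero_mul]
    linarith
  · have h1 := Real.log_le_sub_one_of_pos (show 0 < t / (2 * a / s) by positivity)
    rw [Real.log_div ht.ne' (by positivity)] at h1
    have h2 := mul_le_mul_of_nonneg_left h1 ha
    have h3 : a * (t / (2 * a / s) - 1) = s * t / 2 - a := by
      field_simp
    rw [h3] at h2
    linarith

lemma L_eq_log (p q : ℝ) :
    L p q = (p * Real.log (2 * p / (p + q)) + q * Real.log (2 * q / (p + q))) / Real.log 2 := by
  unfold L Real.logb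
  ring

lemma L_comm (p q : ℝ) : L p q = L q p := by
  unfold L
  rw [add_comm q p]
  ring

lemma L_zero (p : ℝ) : L p 0 = p := by
  unfold L
  by_cases h : p = 0
  · simp [h]
  · have : 2 * p / (p + 0) = 2 := by
      rw [add_zero]
      field_simp
    rw [this]
    simp

lemma L_mono {p q p' q' : ℝ} (h0 : 0 ≤ q') (h1 : q' ≤ q) (h2 : q ≤ p) (h3 : p ≤ p') :
    L p q ≤ L p' q' := by
  rcases (h0.trans h1).eq_or_lt with h | hq
  · have hq' : q' = 0 := by linarith
    rw [← h, hq', L_zero, L_zero]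
    exact h3
  · have hp : 0 < p := by linarith
    have hs : 0 < p' + q' := by linarith
    have hpq : 0 < p + q := by linarith
    rw [L_eq_log, L_eq_log]
    apply div_le_div_of_nonneg_right _ (Real.log_nonneg (by norm_num))
    have g1 := gibbs_aux (a := p') (by linarith) hs (show 0 < 2 * p / (p + q) by positivity)
    have g2 := gibbs_aux (a := q') h0 hs (show 0 < 2 * q / (p + q) by positivity)
    have e : (p' + q') * (2 * p / (p + q)) / 2 + (p' + q') * (2 * q / (p + q)) / 2 = p' + q' := by
      field_simp
    have l1 : 0 ≤ Real.log (2 * p / (p + q)) :=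
      Real.log_nonneg (by rw [le_div_iff₀ hpq]; linarith)
    have l2 : Real.log (2 * q / (p + q)) ≤ 0 :=
      Real.log_nonpos (by positivity) (by rw [div_le_iff₀ hpq]; linarith)
    have m1 := mul_le_mul_of_nonneg_right h3 l1
    have m2 := mul_le_mul_of_nonpos_right h1 l2
    linarith

theorem entropy_monotone (a b : IFV)
    (h : (a.mu ≤ b.mu ∧ b.mu ≤ b.nu ∧ b.nu ≤ a.nu) ∨
         (a.mu ≥ b.mu ∧ b.mu ≥ b.nu ∧ b.nu ≥ a.nu)) :
    E a ≤ E b := by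
  have ha := a.sum_le
  have ha1 := a.mu_nonneg
  have ha2 := a.nu_nonneg
  have key : Z b b.compl ≤ Z a a.compl := by
    simp only [Z, IFV.compl]
    rcases h with ⟨h1, h2, h3⟩ | ⟨h1, h2, h3⟩
    · apply add_le_add
      · apply L_mono <;> linarith
      · apply L_mono <;> linarith
    · rw [L_comm (1 - b.mu), L_comm (1 - a.mu), L_comm b.nu, L_comm a.nu]
      apply add_le_add
      · apply L_mono <;> linarith
      · apply L_mono <;> linarith
  unfold E JS
  have := Real.sqrt_le_sqrt (show Z b b.compl / 2 ≤ Z a a.compl / 2 by linarith)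
  linarith
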